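/- Let l be a monic irreducible polynomial of A such that φ has good reduction at the primes of L lying over l and l is unramified in the maximal separable subextension L_s/k. Let e_l(Γ) = gcd(e(Γ'/Γ), l) and let Γ_φ = {a ∈ Γ : ⟨σ, a⟩ = 0 for all σ ∈ H_Γ(l)} be the kernel of the induced map Γ → Hom_A(H_Γ(l), Λ_l^φ). Then φ_{e_l(Γ)}(Γ_φ) ⊆ φ_l(Γ). -/

import Mathlib

open Polynomial IntermediateField

set_option synthInstance.maxHeartbeats 1000000
set_option maxHeartbeats 1000000

/-- `φ` is a rank one Drinfeld `A = 𝔽_q[T]`-module defined over the finite extension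
`L` of `k = 𝔽_q(T)` (viewed as an `A`-field of generic characteristic): a ring
homomorphism `A → End_{𝔽_q}(k̄, +)` with `φ_T(X) = TX + aX^q` for some nonzero
`a ∈ L`, and `φ_c(X) = cX` for constants `c ∈ 𝔽_q`. -/
def IsDrinfeldRankOne {Fq : Type} [Field Fq] [Fintype Fq]
    (L : IntermediateField (RatFunc Fq) (AlgebraicClosure (RatFunc Fq)))
    (φ : Polynomial Fq →+* AddMonoid.End (AlgebraicClosure (RatFunc Fq))) : Prop :=
  ∃ a : AlgebraicClosure (RatFunc Fq), a ∈ L ∧ a ≠ 0 ∧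
    (∀ α, φ X α = algebraMap (RatFunc Fq) (AlgebraicClosure (RatFunc Fq)) RatFunc.X * α
        + a * α ^ Fintype.card Fq) ∧
    (∀ (c : Fq) (α), φ (C c) α
        = algebraMap (RatFunc Fq) (AlgebraicClosure (RatFunc Fq)) (RatFunc.C c) * α)

/-- An automorphism `τ ∈ Gal(E/L)` fixes the `l`-torsion points `Λ_l^φ` pointwise; when
`E ⊇ L_l = L(Λ_l^φ)` this says exactly `τ ∈ Gal(E/L_l)`. -/
def FixesTorsionD {Fq : Type} [Field Fq] [Fintype Fq]
    {L : IntermediateField (RatFunc Fq) (AlgebraicClosure (RatFunc Fq))}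
    (φ : Polynomial Fq →+* AddMonoid.End (AlgebraicClosure (RatFunc Fq)))
    (l : Polynomial Fq)
    {E : IntermediateField (↥L) (AlgebraicClosure (RatFunc Fq))}
    (τ : ↥E ≃ₐ[↥L] ↥E) : Prop :=
  ∀ x : ↥E, φ l (x : AlgebraicClosure (RatFunc Fq)) = 0 → τ x = x

/-- An automorphism `s ∈ Gal(E/L)` is an extension of `σ_u ∈ Gal(L_l/L)`, i.e. it acts
on the `l`-torsion points `Λ_l^φ ⊆ E` by `λ ↦ φ_u(λ)`. -/
def ExtendsSigmaD {Fq : Type} [Field Fq] [Fintype Fq]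
    {L : IntermediateField (RatFunc Fq) (AlgebraicClosure (RatFunc Fq))}
    (φ : Polynomial Fq →+* AddMonoid.End (AlgebraicClosure (RatFunc Fq)))
    (l : Polynomial Fq)
    {E : IntermediateField (↥L) (AlgebraicClosure (RatFunc Fq))}
    (s : ↥E ≃ₐ[↥L] ↥E) (u : Polynomial Fq) : Prop :=
  ∀ x : ↥E, φ l (x : AlgebraicClosure (RatFunc Fq)) = 0 →
    ((s x : AlgebraicClosure (RatFunc Fq))) = φ u (x : AlgebraicClosure (RatFunc Fq))

/-- `c` is the natural `A`-action on `Gal(E/L_l)`, defined via decompositions: for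
`f ≡ f_1 + ⋯ + f_n (mod l)` with all `gcd(f_i, l) = 1` and extensions `s_i` of
`σ_{f_i} ∈ Gal(L_l/L)`, one has `c f τ = Σ_i s_i ∘ τ ∘ s_i⁻¹` (conjugation action). -/
def IsDecompConjActionD {Fq : Type} [Field Fq] [Fintype Fq]
    {L : IntermediateField (RatFunc Fq) (AlgebraicClosure (RatFunc Fq))}
    (φ : Polynomial Fq →+* AddMonoid.End (AlgebraicClosure (RatFunc Fq)))
    (l : Polynomial Fq)
    {E : IntermediateField (↥L) (AlgebraicClosure (RatFunc Fq))}
    (c : Polynomial Fq → (↥E ≃ₐ[↥L] ↥E) → (↥E ≃ₐ[↥L] ↥E)) : Prop :=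
  ∀ (f : Polynomial Fq) (τ : ↥E ≃ₐ[↥L] ↥E), FixesTorsionD φ l τ →
    ∀ (n : ℕ) (g : Fin n → Polynomial Fq), (∀ i, IsCoprime (g i) l) →
      l ∣ (f - ∑ i, g i) →
      ∀ s : Fin n → (↥E ≃ₐ[↥L] ↥E), (∀ i, ExtendsSigmaD φ l (s i) (g i)) →
        c f τ = (List.ofFn (fun i => s i * τ * (s i)⁻¹)).prod

/-- Stand-in for the standing hypotheses on `l` in Section 3: `l` is a monic
irreducible polynomial of `A` such that (a) `φ` has good reduction at the primes of `L`
lying over `l`, and (b) `l` is unramified in the maximal separable subextension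
`L_s/k`.  By `[Goss, Theorem 7.7.1]` these conditions yield exactly that
`Gal(L(Λ_l^φ)/L) ≅ (A/lA)^*`, every element being of the form
`σ_u : λ ↦ φ_u(λ)` with `u` prime to `l`; we take this description of the Galois group
of `L_l = L(Λ_l^φ)` over `L` as the formal content of the hypotheses (a) and (b). -/
def GaloisGroupOfTorsionIsFull {Fq : Type} [Field Fq] [Fintype Fq]
    {L : IntermediateField (RatFunc Fq) (AlgebraicClosure (RatFunc Fq))}
    (φ : Polynomial Fq →+* AddMonoid.End (AlgebraicClosure (RatFunc Fq)))
    (l : Polynomial Fq)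
    (Ll : IntermediateField (↥L) (AlgebraicClosure (RatFunc Fq))) : Prop :=
  (∀ σ : ↥Ll ≃ₐ[↥L] ↥Ll, ∃ u : Polynomial Fq, ¬ l ∣ u ∧
    ∀ x : ↥Ll, φ l (x : AlgebraicClosure (RatFunc Fq)) = 0 →
      ((σ x : AlgebraicClosure (RatFunc Fq))) = φ u (x : AlgebraicClosure (RatFunc Fq))) ∧
  (∀ u : Polynomial Fq, ¬ l ∣ u → ∃ σ : ↥Ll ≃ₐ[↥L] ↥Ll,
    ∀ x : ↥Ll, φ l (x : AlgebraicClosure (RatFunc Fq)) = 0 →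
      ((σ x : AlgebraicClosure (RatFunc Fq))) = φ u (x : AlgebraicClosure (RatFunc Fq)))

/-!
If `a` pairs to zero with `H_Γ(l)`, then by Galois theory every `α` with `φ_l(α) = a` lies in
`L(Λ_l)`. The group `Gal(L(Λ_l)/L)` acts faithfully on `Λ_l` through `A/l`, a reduced ring of
characteristic `p`, where `u ^ p = 1` forces `u = 1`; so its order `n` is prime to `p`. The `n`
conjugates of `α` all solve `φ_l(X) = a`, hence `φ_l(Tr α) = n a`, and dividing by `n` in `𝔽_p`
gives `b ∈ L` with `φ_l(b) = a`. Then `b ∈ Γ'`, so both `φ_e` and `φ_l`, and therefore `φ_d` for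
`d = gcd(e, l)`, map `b` into `Γ`.
-/

section EtalePolynomial

theorem separable_sub_C_of_isUnit_derivative {R : Type*} [CommRing R] {P : R[X]}
    (hP : IsUnit (derivative P)) (a : R) : (P - C a).Separable := by
  obtain ⟨b, hb⟩ := hP.exists_left_inv
  exact ⟨0, b, by rw [derivative_sub, derivative_C, sub_zero, hb, zero_mul, zero_add]⟩

variable {K Ω : Type*} [Field K] [Field Ω] [Algebra K Ω] {P : K[X]}

theorem aeval_preimage_eq_iUnion_rootSet (hP : IsUnit (derivative P)) {S : Set Ω}
    (hS : S ⊆ Set.range (algebraMap K Ω)) :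
    (aeval · P) ⁻¹' S = ⋃ a : algebraMap K Ω ⁻¹' S, (P - C a.1).rootSet Ω := by
  ext x
  simp only [Set.mem_preimage, Set.mem_iUnion, map_sub, aeval_C, sub_eq_zero,
    mem_rootSet_of_ne (separable_sub_C_of_isUnit_derivative hP _).ne_zero]
  constructor
  · intro hx
    obtain ⟨a, ha⟩ := hS hx
    exact ⟨⟨a, Set.mem_preimage.2 (ha ▸ hx)⟩, ha.symm⟩
  · rintro ⟨⟨a, ha⟩, hxa⟩
    exact hxa ▸ ha

variable [IsAlgClosed Ω]

theorem exists_aeval_eq_of_isUnit_derivative (hP : IsUnit (derivative P)) (a : K) :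
    ∃ x : Ω, aeval x P = algebraMap K Ω a := by
  have hdeg : (P - C a).degree ≠ 0 := by
    intro h
    have hzero : derivative (P - C a) = 0 := by rw [eq_C_of_degree_eq_zero h, derivative_C]
    rw [derivative_sub, derivative_C, sub_zero] at hzero
    exact hP.ne_zero hzero
  obtain ⟨x, hx⟩ := IsAlgClosed.exists_aeval_eq_zero Ω (P - C a) hdeg
  exact ⟨x, by rwa [map_sub, aeval_C, sub_eq_zero] at hx⟩

theorem finiteDimensional_adjoin_rootSet (p : K[X]) :
    FiniteDimensional K (adjoin K (p.rootSet Ω)) :=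
  haveI := adjoin_rootSet_isSplittingField (IsAlgClosed.splits (p.map (algebraMap K Ω)))
  IsSplittingField.finiteDimensional _ p

theorem isGalois_adjoin_rootSet {p : K[X]} (hp : p.Separable) :
    IsGalois K (adjoin K (p.rootSet Ω)) :=
  haveI := adjoin_rootSet_isSplittingField (IsAlgClosed.splits (p.map (algebraMap K Ω)))
  IsGalois.of_separable_splitting_field hp

theorem isGalois_adjoin_aeval_preimage (hP : IsUnit (derivative P)) {S : Set Ω}
    (hS : S ⊆ Set.range (algebraMap K Ω)) :
    IsGalois K (adjoin K ((aeval · P) ⁻¹' S)) := by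
  rw [aeval_preimage_eq_iUnion_rootSet hP hS, adjoin_iUnion]
  have hgal (a : algebraMap K Ω ⁻¹' S) : IsGalois K (adjoin K ((P - C a.1).rootSet Ω)) :=
    isGalois_adjoin_rootSet (separable_sub_C_of_isUnit_derivative hP a)
  exact ⟨⟩

end EtalePolynomial

section GaloisTheory

variable {K Ω : Type*} [Field K] [Field Ω] [Algebra K Ω]

theorem mem_of_forall_algEquiv_eq {F E : IntermediateField K Ω} (h : F ≤ E) [IsGalois K E] {x : E}
    (hx : ∀ σ : E ≃ₐ[K] E, (∀ y : E, (y : Ω) ∈ F → σ y = y) → σ x = x) : (x : Ω) ∈ F := by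
  rw [← mem_restrict h, ← InfiniteGalois.fixedField_fixingSubgroup (restrict h)]
  rintro ⟨σ, hσ⟩
  exact hx σ fun y hy => hσ ⟨y, (mem_restrict h y).2 hy⟩

theorem aeval_algEquiv_eq {F : IntermediateField K Ω} (σ : F ≃ₐ[K] F) {P : K[X]} {x : F} {a : K}
    (hx : aeval (x : Ω) P = algebraMap K Ω a) : aeval (σ x : Ω) P = algebraMap K Ω a := by
  have hxF : aeval x P = algebraMap K F a :=
    F.val.injective ((aeval_algHom_apply F.val x P).symm.trans hx)
  calc aeval (σ x : Ω) P = (σ (aeval x P) : F) :=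
        aeval_algHom_apply (F.val.comp σ.toAlgHom) x P
    _ = algebraMap K Ω a := by rw [hxF, σ.commutes]; rfl

theorem exists_aeval_algebraMap_eq_of_not_dvd_card {p : ℕ} [Fact p.Prime] [CharP Ω p] {g : Ω →+ Ω}
    {P : K[X]} (hg : ∀ x, g x = aeval x P) {F : IntermediateField K Ω} [FiniteDimensional K F]
    [IsGalois K F] (hcard : ¬ p ∣ Nat.card (F ≃ₐ[K] F)) {α : F} {a : K}
    (hα : g α = algebraMap K Ω a) : ∃ b : K, g (algebraMap K Ω b) = algebraMap K Ω a := by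
  have htrace : g (algebraMap K Ω (Algebra.trace K F α)) =
      Nat.card (F ≃ₐ[K] F) • algebraMap K Ω a := by
    have hsum : algebraMap K Ω (Algebra.trace K F α) = ∑ σ : F ≃ₐ[K] F, (σ α : Ω) := by
      rw [IsScalarTower.algebraMap_apply K F Ω, trace_eq_sum_automorphisms, map_sum]; rfl
    have hconj (σ : F ≃ₐ[K] F) : g (σ α) = algebraMap K Ω a := by
      rw [hg] at hα ⊢
      exact aeval_algEquiv_eq σ hα
    rw [hsum, map_sum, Finset.sum_congr rfl fun σ _ => hconj σ, Finset.sum_const, Finset.card_univ,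
      Nat.card_eq_fintype_card]
  have hp : p.Prime := Fact.out
  obtain ⟨m, -, hm⟩ := Nat.exists_mul_mod_eq_one_of_coprime
    ((Nat.Prime.coprime_iff_not_dvd hp).2 hcard).symm hp.one_lt
  have hcast : ((Nat.card (F ≃ₐ[K] F) * m : ℕ) : Ω) = 1 := by
    rw [← Nat.cast_one, CharP.natCast_eq_natCast Ω p, Nat.ModEq, hm, Nat.mod_eq_of_lt hp.one_lt]
  refine ⟨m • Algebra.trace K F α, ?_⟩
  rw [map_nsmul, map_nsmul, htrace, smul_smul, nsmul_eq_mul, mul_comm m, hcast, one_mul]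

end GaloisTheory

theorem isRadical_of_squarefree_mem {A : Type*} [CommRing A] [IsDomain A] [IsPrincipalIdealRing A]
    {l : A} (hl : Squarefree l) {I : Ideal A} (hlI : l ∈ I) : I.IsRadical := by
  obtain ⟨g, rfl⟩ := IsPrincipalIdealRing.principal I
  exact isRadical_iff_span_singleton.1
    (hl.squarefree_of_dvd (Ideal.mem_span_singleton.1 hlI)).isRadical

theorem smul_eq_self_of_pow_char_smul_eq_self {A M : Type*} [CommRing A] [IsDomain A]
    [IsPrincipalIdealRing A] (p : ℕ) [Fact p.Prime] [CharP A p] [AddCommGroup M] [Module A M]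
    {l : A} (hl : Squarefree l) {x : M} (hx : l • x = 0) {u : A} (hu : u ^ p • x = x) :
    u • x = x := by
  have hmem : (u - 1) ^ p ∈ Ideal.torsionOf A M x := by
    rw [Ideal.mem_torsionOf_iff, sub_pow_char, one_pow, sub_smul, one_smul, hu, sub_self]
  have hsub : (u - 1) • x = 0 := isRadical_of_squarefree_mem hl hx ⟨p, hmem⟩
  rwa [sub_smul, one_smul, sub_eq_zero] at hsub

theorem algEquiv_pow_eq_pow_smul {A K Ω : Type*} [CommRing A] [Field K] [Field Ω] [Algebra K Ω]
    [Module A Ω] {F : IntermediateField K Ω} {l u : A} {σ : F ≃ₐ[K] F}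
    (hσ : ∀ x : F, l • (x : Ω) = 0 → (σ x : Ω) = u • (x : Ω)) {x : F} (hx : l • (x : Ω) = 0)
    (n : ℕ) : ((σ ^ n) x : Ω) = u ^ n • (x : Ω) := by
  induction n with
  | zero => rw [pow_zero, pow_zero, one_smul, AlgEquiv.one_apply]
  | succ n ih =>
    have htors : l • ((σ ^ n) x : Ω) = 0 := by rw [ih, smul_comm, hx, smul_zero]
    rw [pow_succ', AlgEquiv.mul_apply, hσ _ htors, ih, smul_smul, ← pow_succ']

theorem charP_of_module_of_prime {A F : Type*} [Semiring A] [Ring F] [Nontrivial F]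
    [Module A F] (p : ℕ) [Fact p.Prime] [CharP A p] : CharP F p := by
  refine (CharP.charP_iff_prime_eq_zero Fact.out).2 ?_
  rw [← nsmul_one p, ← Nat.cast_smul_eq_nsmul A, CharP.cast_eq_zero, zero_smul]

section DivisionField

variable {A : Type*} [CommRing A] (K Ω : Type*) [Field K] [Field Ω] [Algebra K Ω] [Module A Ω]

variable {Ω} in
/-- The field `K((1/l)Γ)` generated over `K` by the `x ∈ Ω` with `l • x ∈ Γ`. It always contains
the `l`-torsion, so it is the field `L_{l,Γ} = L(Λ_l, (1/l)Γ)` when `K = L`. -/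
def divisionField (l : A) (Γ : Submodule A Ω) : IntermediateField K Ω :=
  adjoin K {x | l • x ∈ Γ}

/-- The field `K(Λ_l)` generated over `K` by the `l`-torsion of the `A`-module `Ω`, encoded as the
division field of the zero module so that facts on division fields specialize to it. -/
abbrev torsionField (l : A) : IntermediateField K Ω :=
  divisionField K l (⊥ : Submodule A Ω)

variable {K Ω} {l : A}

theorem divisionField_mono {Γ Δ : Submodule A Ω} (h : Γ ≤ Δ) :
    divisionField K l Γ ≤ divisionField K l Δ :=
  adjoin.mono K _ _ fun _ hx => h hx

theorem mem_divisionField {Γ : Submodule A Ω} {x : Ω} (hx : l • x ∈ Γ) :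
    x ∈ divisionField K l Γ :=
  subset_adjoin K _ hx

theorem isGalois_divisionField [IsAlgClosed Ω] {P : K[X]} (hP : IsUnit (derivative P))
    (hlP : ∀ x : Ω, l • x = aeval x P) {Γ : Submodule A Ω}
    (hΓ : (Γ : Set Ω) ⊆ Set.range (algebraMap K Ω)) : IsGalois K (divisionField K l Γ) := by
  have hpreimage : {x : Ω | l • x ∈ Γ} = (aeval · P) ⁻¹' (Γ : Set Ω) :=
    Set.ext fun x => by rw [Set.mem_ofPred_eq, hlP]; rfl
  rw [divisionField, hpreimage]
  exact isGalois_adjoin_aeval_preimage hP hΓ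

theorem isGalois_torsionField [IsAlgClosed Ω] {P : K[X]} (hP : IsUnit (derivative P))
    (hlP : ∀ x : Ω, l • x = aeval x P) : IsGalois K (torsionField K Ω l) :=
  isGalois_divisionField hP hlP fun _ hx => ⟨0, by rw [map_zero, (Submodule.mem_bot A).1 hx]⟩

theorem finiteDimensional_torsionField [IsAlgClosed Ω] {P : K[X]} (hP : P ≠ 0)
    (hlP : ∀ x : Ω, l • x = aeval x P) : FiniteDimensional K (torsionField K Ω l) := by
  have htorsion : {x : Ω | l • x ∈ (⊥ : Submodule A Ω)} = P.rootSet Ω :=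
    Set.ext fun x => by rw [mem_rootSet_of_ne hP, ← hlP]; rfl
  rw [torsionField, divisionField, htorsion]
  exact finiteDimensional_adjoin_rootSet P

theorem algEquiv_eq_one_of_forall_torsion_fixed {σ : torsionField K Ω l ≃ₐ[K] torsionField K Ω l}
    (hσ : ∀ x : torsionField K Ω l, l • (x : Ω) = 0 → σ x = x) : σ = 1 :=
  AlgEquiv.coe_toAlgHom_injective (algHom_ext_of_eq_adjoin K rfl fun _ hx => hσ ⟨_, _⟩ hx)

theorem not_dvd_card_torsionField_algEquiv [IsDomain A] [IsPrincipalIdealRing A] (p : ℕ)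
    [Fact p.Prime] [CharP A p] (hl : Squarefree l) [FiniteDimensional K (torsionField K Ω l)]
    (hGal : ∀ σ : torsionField K Ω l ≃ₐ[K] torsionField K Ω l, ∃ u : A,
      ∀ x : torsionField K Ω l, l • (x : Ω) = 0 → (σ x : Ω) = u • (x : Ω)) :
    ¬ p ∣ Nat.card (torsionField K Ω l ≃ₐ[K] torsionField K Ω l) := by
  intro hdvd
  obtain ⟨σ, hσ⟩ := exists_prime_orderOf_dvd_card' p hdvd
  obtain ⟨u, hu⟩ := hGal σ
  have hσ1 : σ = 1 := algEquiv_eq_one_of_forall_torsion_fixed fun x hx => by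
    have hup : u ^ p • (x : Ω) = x := by
      rw [← algEquiv_pow_eq_pow_smul hu hx, ← hσ, pow_orderOf_eq_one, AlgEquiv.one_apply]
    exact Subtype.ext ((hu x hx).trans (smul_eq_self_of_pow_char_smul_eq_self p hl hx hup))
  exact (Fact.out : p.Prime).one_lt.ne' (by rw [← hσ, hσ1, orderOf_one])

theorem exists_smul_algebraMap_eq [IsAlgClosed Ω] [IsDomain A] [IsPrincipalIdealRing A] (p : ℕ)
    [Fact p.Prime] [CharP A p] (hl : Squarefree l) {P : K[X]} (hP : IsUnit (derivative P))
    (hlP : ∀ x : Ω, l • x = aeval x P)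
    (hGal : ∀ σ : torsionField K Ω l ≃ₐ[K] torsionField K Ω l, ∃ u : A,
      ∀ x : torsionField K Ω l, l • (x : Ω) = 0 → (σ x : Ω) = u • (x : Ω))
    {Γ : Submodule A Ω} (hΓ : (Γ : Set Ω) ⊆ Set.range (algebraMap K Ω)) {a : Ω} (ha : a ∈ Γ)
    (hker : ∀ σ : divisionField K l Γ ≃ₐ[K] divisionField K l Γ,
      (∀ x : divisionField K l Γ, l • (x : Ω) = 0 → σ x = x) →
        ∀ α : divisionField K l Γ, l • (α : Ω) = a → σ α = α) :
    ∃ b : K, l • algebraMap K Ω b = a := by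
  obtain ⟨a, rfl⟩ := hΓ ha
  obtain ⟨α, hα⟩ := exists_aeval_eq_of_isUnit_derivative (Ω := Ω) hP a
  rw [← hlP] at hα
  have hαE : α ∈ divisionField K l Γ := mem_divisionField (hα ▸ ha)
  have hE : IsGalois K (divisionField K l Γ) := isGalois_divisionField hP hlP hΓ
  have hαF : α ∈ torsionField K Ω l :=
    mem_of_forall_algEquiv_eq (divisionField_mono bot_le) (x := ⟨α, hαE⟩) fun σ hσ =>
      hker σ (fun x hx => hσ x (mem_divisionField hx)) _ hα
  have hF : IsGalois K (torsionField K Ω l) := isGalois_torsionField hP hlP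
  have hfin : FiniteDimensional K (torsionField K Ω l) :=
    finiteDimensional_torsionField (fun h => hP.ne_zero (by rw [h, derivative_zero])) hlP
  have hchar : CharP Ω p := charP_of_module_of_prime (A := A) p
  exact exists_aeval_algebraMap_eq_of_not_dvd_card (p := p)
    (g := DistribSMul.toAddMonoidHom Ω l) hlP
    (not_dvd_card_torsionField_algEquiv p hl hGal) (α := ⟨α, hαF⟩) hα

end DivisionField

theorem exists_aeval_eq_of_C_of_X {R K Ω : Type*} [CommSemiring R] [CommSemiring K]
    [CommSemiring Ω] [Algebra K Ω] {φ : R[X] →+* AddMonoid.End Ω} {ι : R →+* K}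
    (hC : ∀ c x, φ (C c) x = algebraMap K Ω (ι c) * x) {Q : K[X]} (hX : ∀ x, φ X x = aeval x Q)
    {t : K} (hQ : derivative Q = C t) (f : R[X]) :
    ∃ P : K[X], (∀ x, φ f x = aeval x P) ∧ derivative P = C (f.eval₂ ι t) := by
  induction f using Polynomial.induction_on' with
  | add f g hf hg =>
    obtain ⟨P, hP, hP'⟩ := hf
    obtain ⟨S, hS, hS'⟩ := hg
    refine ⟨P + S, fun x => ?_, by rw [derivative_add, hP', hS', eval₂_add, C_add]⟩
    rw [map_add, map_add, ← hP, ← hS]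
    rfl
  | monomial n c =>
    induction n with
    | zero =>
      refine ⟨C (ι c) * X, fun x => ?_, ?_⟩
      · rw [monomial_zero_left, hC, map_mul, aeval_C, aeval_X]
      · rw [derivative_C_mul, derivative_X, mul_one, monomial_zero_left, eval₂_C]
    | succ n ih =>
      obtain ⟨P, hP, hP'⟩ := ih
      refine ⟨Q.comp P, fun x => ?_, ?_⟩
      · rw [← X_mul_monomial, map_mul, aeval_comp, ← hP, ← hX]
        rfl
      · rw [derivative_comp, hQ, C_comp, hP', ← X_mul_monomial, eval₂_mul, eval₂_X, ← C_mul,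
          mul_comm]

theorem IsDrinfeldRankOne.exists_isUnit_derivative {Fq : Type} [Field Fq] [Fintype Fq]
    {L : IntermediateField (RatFunc Fq) (AlgebraicClosure (RatFunc Fq))}
    {φ : Fq[X] →+* AddMonoid.End (AlgebraicClosure (RatFunc Fq))} (hφ : IsDrinfeldRankOne L φ)
    {f : Fq[X]} (hf : f ≠ 0) :
    ∃ P : L[X], IsUnit (derivative P) ∧ ∀ x, φ f x = aeval x P := by
  obtain ⟨a, haL, -, hX, hC⟩ := hφ
  let γ : RatFunc Fq →+* L := algebraMap (RatFunc Fq) L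
  let Q : L[X] := C (γ RatFunc.X) * X + C ⟨a, haL⟩ * X ^ Fintype.card Fq
  have hcast : (Fintype.card Fq : L) = 0 := by
    rw [← map_natCast (γ.comp RatFunc.C), FiniteField.cast_card_eq_zero, map_zero]
  have hQ : derivative Q = C (γ RatFunc.X) := by
    simp only [Q, derivative_add, derivative_C_mul, derivative_X, derivative_X_pow, hcast, map_zero,
      zero_mul, mul_zero, add_zero, mul_one]
  have hγ : eval₂RingHom (γ.comp RatFunc.C) (γ RatFunc.X) =
      γ.comp (algebraMap Fq[X] (RatFunc Fq)) := by
    ext <;> simp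
  obtain ⟨P, hP, hP'⟩ := exists_aeval_eq_of_C_of_X (ι := γ.comp RatFunc.C) (K := L) (Q := Q)
    hC (fun x => by simp only [hX, Q, map_add, map_mul, map_pow, aeval_C, aeval_X]; rfl) hQ f
  refine ⟨P, ?_, hP⟩
  have hne : f.eval₂ (γ.comp RatFunc.C) (γ RatFunc.X) ≠ 0 := by
    rw [← coe_eval₂RingHom, hγ]
    simpa using hf
  rw [hP']
  exact isUnit_C.2 hne.isUnit

/-- Here `Ω` carries the `A`-module structure given by `φ`, and `P` is `φ_l`. Generic characteristic
enters as the invertibility of `P'`, which for a Drinfeld module is the constant `l`. -/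
theorem drinfeld_kummer_kernel_bound_general {A K Ω : Type*} [CommRing A] [IsDomain A]
    [IsPrincipalIdealRing A] (p : ℕ) [Fact p.Prime] [CharP A p] [Field K] [Field Ω] [IsAlgClosed Ω]
    [Algebra K Ω] [Module A Ω] {l : A} (hl : Squarefree l) {P : K[X]}
    (hP : IsUnit (derivative P)) (hlP : ∀ x : Ω, l • x = aeval x P)
    (hGal : ∀ σ : torsionField K Ω l ≃ₐ[K] torsionField K Ω l, ∃ u : A,
      ∀ x : torsionField K Ω l, l • (x : Ω) = 0 → (σ x : Ω) = u • (x : Ω))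
    {Γ : Submodule A Ω} (hΓ : (Γ : Set Ω) ⊆ Set.range (algebraMap K Ω)) {e d : A}
    (he : ∀ b : K, l • algebraMap K Ω b ∈ Γ → e • algebraMap K Ω b ∈ Γ)
    (hd : d ∈ Ideal.span {e, l}) {a : Ω} (ha : a ∈ Γ)
    (hker : ∀ σ : divisionField K l Γ ≃ₐ[K] divisionField K l Γ,
      (∀ x : divisionField K l Γ, l • (x : Ω) = 0 → σ x = x) →
        ∀ α : divisionField K l Γ, l • (α : Ω) = a → σ α = α) :
    ∃ γ ∈ Γ, l • γ = d • a := by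
  obtain ⟨b, rfl⟩ := exists_smul_algebraMap_eq p hl hP hlP hGal hΓ ha hker
  obtain ⟨u, v, rfl⟩ := Ideal.mem_span_pair.1 hd
  refine ⟨(u * e + v * l) • algebraMap K Ω b, ?_, smul_comm _ _ _⟩
  rw [add_smul, mul_smul, mul_smul]
  exact Γ.add_mem (Γ.smul_mem u (he b ha)) (Γ.smul_mem v ha)

/-- **Theorem 3.4.**
Let `l` be a monic irreducible polynomial of `A` such that `φ` has good reduction at
the primes of `L` lying over `l` and `l` is unramified in the maximal separable
subextension `L_s/k` (encoded by `GaloisGroupOfTorsionIsFull`).  Let `Γ` be a finitely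
generated `A`-submodule of `(L,+)`, `Γ' = (1/l)Γ ∩ L`, let `e = e(Γ'/Γ)` be the monic
polynomial of smallest degree with `φ_e(Γ') ⊆ Γ`, and let `e_l(Γ) = gcd(e(Γ'/Γ), l)`.
Let `Γ_φ = {a ∈ Γ : ⟨σ, a⟩ = 0 for all σ ∈ H_Γ(l)}` be the kernel of the induced map
`Γ → Hom_A(H_Γ(l), Λ_l^φ)`.  Then `φ_{e_l(Γ)}(Γ_φ) ⊆ φ_l(Γ)`. -/
theorem drinfeld_kummer_kernel_bound
    {Fq : Type} [Field Fq] [Fintype Fq]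
    (L : IntermediateField (RatFunc Fq) (AlgebraicClosure (RatFunc Fq)))
    [FiniteDimensional (RatFunc Fq) (↥L)]
    (φ : Polynomial Fq →+* AddMonoid.End (AlgebraicClosure (RatFunc Fq)))
    (hφ : IsDrinfeldRankOne L φ)
    (l : Polynomial Fq) (hlm : l.Monic) (hlirr : Irreducible l)
    (Ll : IntermediateField (↥L) (AlgebraicClosure (RatFunc Fq)))
    (hLl : Ll = adjoin (↥L) {x | φ l x = 0})
    (hGal : GaloisGroupOfTorsionIsFull φ l Ll)
    -- Γ : a finitely generated A-submodule of (L, +)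
    (Γ : AddSubgroup (AlgebraicClosure (RatFunc Fq)))
    (hΓL : ∀ x ∈ Γ, x ∈ L)
    (hΓA : ∀ (f : Polynomial Fq), ∀ x ∈ Γ, φ f x ∈ Γ)
    (hΓfg : ∃ (n : ℕ) (a : Fin n → AlgebraicClosure (RatFunc Fq)), (∀ i, a i ∈ Γ) ∧
      ∀ x ∈ Γ, ∃ g : Fin n → Polynomial Fq, x = ∑ i, φ (g i) (a i))
    -- L_{l,Γ} = L(Λ_l^φ, (1/l)Γ)
    (E : IntermediateField (↥L) (AlgebraicClosure (RatFunc Fq)))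
    (hE : E = adjoin (↥L) {x | φ l x ∈ Γ})
    -- e = e(Γ'/Γ) : the exponent of Γ' = (1/l)Γ ∩ L over Γ
    (e : Polynomial Fq) (he : e.Monic)
    (heΓ : ∀ x : AlgebraicClosure (RatFunc Fq), x ∈ L → φ l x ∈ Γ → φ e x ∈ Γ)
    (hemin : ∀ e' : Polynomial Fq, e'.Monic →
      (∀ x : AlgebraicClosure (RatFunc Fq), x ∈ L → φ l x ∈ Γ → φ e' x ∈ Γ) →
      e.degree ≤ e'.degree)
    -- d = e_l(Γ) = gcd(e(Γ'/Γ), l)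
    (d : Polynomial Fq) (hd1 : d ∣ e) (hd2 : d ∣ l)
    (hd3 : ∀ d' : Polynomial Fq, d' ∣ e → d' ∣ l → d' ∣ d) :
    -- φ_{e_l(Γ)}(Γ_φ) ⊆ φ_l(Γ)
    ∀ a ∈ Γ,
      (∀ σ : ↥E ≃ₐ[↥L] ↥E, FixesTorsionD φ l σ →
        ∀ α : ↥E, φ l (α : AlgebraicClosure (RatFunc Fq)) = a → σ α = α) →
      ∃ γ ∈ Γ, φ l γ = φ d a := by
  intro a ha hker
  subst hLl hE
  obtain ⟨p, hp⟩ := CharP.exists Fq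
  have : Fact p.Prime := ⟨CharP.char_is_prime Fq p⟩
  let : Module Fq[X] (AlgebraicClosure (RatFunc Fq)) := Module.compHom _ φ
  obtain ⟨P, hP, hlP⟩ := hφ.exists_isUnit_derivative hlirr.ne_zero
  have hd : d ∈ Ideal.span {e, l} := by
    classical
    rw [← EuclideanDomain.span_gcd, Ideal.mem_span_singleton]
    exact hd3 _ (EuclideanDomain.gcd_dvd_left e l) (EuclideanDomain.gcd_dvd_right e l)
  exact drinfeld_kummer_kernel_bound_general p hlirr.squarefree hP hlP
    (fun σ => (hGal.1 σ).imp fun u hu => hu.2)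
    (Γ := { Γ with smul_mem' := fun f _ hx => hΓA f _ hx })
    (fun x hx => ⟨⟨x, hΓL x hx⟩, rfl⟩) (fun b => heΓ b b.2) hd ha hker
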